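/- Let X be an edge-transitive simplicial surface such that Aut(X) has exactly two orbits on the faces X_2. Then any two faces of X that share an edge lie in different Aut(X)-orbits; in other words, the two face orbits are the colour classes of a face-2-colouring of X. -/

import Mathlib

open Finset

/-- A (connected) simplicial surface: a finite, downward-closed family of nonempty subsets of
the vertex set `α`, pure of dimension 2, such that every edge lies in exactly two faces,
the faces around each vertex form an umbrella, and the surface is connected. -/
structure SimplicialSurface (α : Type*) [Fintype α] [DecidableEq α] where
  cplx : Finset (Finset α)
  nonempty_of_mem : ∀ s ∈ cplx, s.Nonempty
  down_closed : ∀ s ∈ cplx, ∀ t : Finset α, t.Nonempty → t ⊆ s → t ∈ cplx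
  card_le_three : ∀ s ∈ cplx, s.card ≤ 3
  pure_two : ∀ s ∈ cplx, ∃ F ∈ cplx, s ⊆ F ∧ F.card = 3
  dim_two : ∃ F ∈ cplx, F.card = 3
  all_vertices : ∀ x : α, {x} ∈ cplx
  edge_in_two_faces : ∀ e ∈ cplx, e.card = 2 →
    (cplx.filter (fun F => e ⊆ F ∧ F.card = 3)).card = 2
  umbrella_exists : ∀ v : α, ∃ n : ℕ, 0 < n ∧ ∃ u : Fin n → Finset α,
    Function.Injective u ∧
    (∀ i, u i ∈ cplx ∧ (u i).card = 3 ∧ v ∈ u i) ∧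
    (∀ F ∈ cplx, F.card = 3 → v ∈ F → ∃ i, u i = F) ∧
    (∀ i : Fin n, (u i ∩ u (finRotate n i)).card = 2)
  connected : ∀ F ∈ cplx, ∀ G ∈ cplx, F.card = 3 → G.card = 3 →
    Relation.ReflTransGen (fun A B => A ∈ cplx ∧ B ∈ cplx ∧ (A ∩ B).card = 2) F G

lemma Equiv.Perm.finset_image_mul {α : Type*} [DecidableEq α] (π σ : Equiv.Perm α)
    (s : Finset α) :
    Finset.image ⇑(π * σ) s = Finset.image ⇑π (Finset.image ⇑σ s) := by
  rw [Finset.image_image]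
  rfl

namespace SimplicialSurface

variable {α : Type*} [Fintype α] [DecidableEq α] (X : SimplicialSurface α)

/-- The set `X_2` of faces of `X`, i.e. the 3-element members. -/
def faces : Finset (Finset α) := X.cplx.filter fun s => s.card = 3

/-- The set `X_1` of edges of `X`, i.e. the 2-element members. -/
def edges : Finset (Finset α) := X.cplx.filter fun s => s.card = 2

/-- The automorphism group of `X`: permutations of the vertices mapping members of the
complex to members of the complex. -/
def aut : Subgroup (Equiv.Perm α) where
  carrier := { π | ∀ s : Finset α, s ∈ X.cplx ↔ Finset.image ⇑π s ∈ X.cplx }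
  one_mem' := by intro s; simp
  mul_mem' := by
    intro π σ hπ hσ s
    rw [Equiv.Perm.finset_image_mul, ← hπ (Finset.image ⇑σ s), ← hσ s]
  inv_mem' := by
    intro π hπ s
    have h2 : Finset.image ⇑π (Finset.image ⇑π⁻¹ s) = s := by ext x; simp
    have h := hπ (Finset.image ⇑π⁻¹ s)
    rw [h2] at h
    exact h.symm

/-- The setwise stabiliser in `Aut(X)` of a set `s` of vertices. -/
def stab (s : Finset α) : Subgroup (Equiv.Perm α) where
  carrier := { π | π ∈ X.aut ∧ Finset.image ⇑π s = s }
  one_mem' := ⟨X.aut.one_mem, by simp⟩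
  mul_mem' := by
    rintro π σ ⟨hπ, hπs⟩ ⟨hσ, hσs⟩
    exact ⟨X.aut.mul_mem hπ hσ, by rw [Equiv.Perm.finset_image_mul, hσs, hπs]⟩
  inv_mem' := by
    rintro π ⟨hπ, hπs⟩
    refine ⟨X.aut.inv_mem hπ, ?_⟩
    calc Finset.image ⇑π⁻¹ s = Finset.image ⇑π⁻¹ (Finset.image ⇑π s) := by rw [hπs]
      _ = s := by ext x; simp

/-- `X` is edge-transitive if `Aut(X)` acts transitively on the edges `X_1`. -/
def EdgeTransitive : Prop :=
  ∀ e₁ ∈ X.edges, ∀ e₂ ∈ X.edges, ∃ π ∈ X.aut, Finset.image ⇑π e₁ = e₂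

/-- The orbit of a set of vertices under `Aut(X)`. -/
def orbit (s : Finset α) : Set (Finset α) := { t | ∃ π ∈ X.aut, Finset.image ⇑π s = t }

/-- The set of `Aut(X)`-orbits on the faces of `X`. -/
def faceOrbits : Set (Set (Finset α)) := { O | ∃ F ∈ X.faces, O = X.orbit F }

/-- The set of `Aut(X)`-orbits on the vertices of `X`. -/
def vertexOrbits : Set (Set α) := { O | ∃ v : α, O = { w | ∃ π ∈ X.aut, π v = w } }

/-- The degree of a vertex: the number of faces containing it. -/
def degree (v : α) : ℕ := (X.faces.filter fun F => v ∈ F).card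

end SimplicialSurface

/-!
An edge lies on exactly two faces `F` and `G`. Edge-transitivity moves an edge of any given face
onto that edge, and hence the given face onto `F` or `G`. So the face orbits are those of `F` and
`G`, and there are two of them only if these differ.
-/

namespace SimplicialSurface

variable {α : Type*} [Fintype α] [DecidableEq α] {X : SimplicialSurface α}
  {π : Equiv.Perm α} {e s F G H : Finset α}

lemma mem_faces : s ∈ X.faces ↔ s ∈ X.cplx ∧ s.card = 3 := mem_filter

lemma mem_edges : s ∈ X.edges ↔ s ∈ X.cplx ∧ s.card = 2 := mem_filter

lemma image_mem_faces_iff (hπ : π ∈ X.aut) : s.image π ∈ X.faces ↔ s ∈ X.faces := by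
  rw [mem_faces, mem_faces, ← hπ s, card_image_of_injective s π.injective]

lemma orbit_image (hπ : π ∈ X.aut) (s : Finset α) : X.orbit (s.image π) = X.orbit s := by
  ext t
  constructor
  · rintro ⟨σ, hσ, rfl⟩
    exact ⟨σ * π, X.aut.mul_mem hσ hπ, Equiv.Perm.finset_image_mul σ π s⟩
  · rintro ⟨σ, hσ, rfl⟩
    refine ⟨σ * π⁻¹, X.aut.mul_mem hσ (X.aut.inv_mem hπ), ?_⟩
    rw [← Equiv.Perm.finset_image_mul, inv_mul_cancel_right]

lemma exists_edge_subset (hF : F ∈ X.faces) : ∃ e ∈ X.edges, e ⊆ F := by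
  obtain ⟨hF, hF3⟩ := mem_faces.mp hF
  obtain ⟨e, heF, he2⟩ := exists_subset_card_eq (show 2 ≤ F.card by omega)
  have he : e.Nonempty := card_pos.mp (by omega)
  exact ⟨e, mem_edges.mpr ⟨X.down_closed F hF e he heF, he2⟩, heF⟩

lemma card_filter_subset_faces (he : e ∈ X.edges) : (X.faces.filter (e ⊆ ·)).card = 2 := by
  obtain ⟨he, he2⟩ := mem_edges.mp he
  rw [← X.edge_in_two_faces e he he2, faces, filter_filter]
  simp only [and_comm]

lemma filter_subset_faces_eq_pair (he : e ∈ X.edges) (hF : F ∈ X.faces) (hG : G ∈ X.faces)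
    (heF : e ⊆ F) (heG : e ⊆ G) (hFG : F ≠ G) : X.faces.filter (e ⊆ ·) = {F, G} := by
  symm
  apply eq_of_subset_of_card_le
  · simp only [insert_subset_iff, singleton_subset_iff, mem_filter]
    exact ⟨⟨hF, heF⟩, hG, heG⟩
  · rw [card_filter_subset_faces he, card_pair hFG]

lemma ne_of_inter_mem_edges (hF : F ∈ X.faces) (hFG : F ∩ G ∈ X.edges) : F ≠ G := by
  rintro rfl
  have hF3 := (mem_faces.mp hF).2
  have hF2 := (mem_edges.mp hFG).2
  rw [inter_self] at hF2
  omega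

namespace EdgeTransitive

lemma exists_subset_image (hX : X.EdgeTransitive) (he : e ∈ X.edges) (hH : H ∈ X.faces) :
    ∃ π ∈ X.aut, e ⊆ H.image π := by
  obtain ⟨e', he', he'H⟩ := exists_edge_subset hH
  obtain ⟨π, hπ, rfl⟩ := hX e' he' e he
  exact ⟨π, hπ, image_subset_image he'H⟩

lemma orbit_eq_or_eq (hX : X.EdgeTransitive) (hF : F ∈ X.faces) (hG : G ∈ X.faces)
    (hFG : F ∩ G ∈ X.edges) (hH : H ∈ X.faces) :
    X.orbit H = X.orbit F ∨ X.orbit H = X.orbit G := by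
  obtain ⟨π, hπ, hsub⟩ := hX.exists_subset_image hFG hH
  have hpair : X.faces.filter (F ∩ G ⊆ ·) = {F, G} :=
    filter_subset_faces_eq_pair hFG hF hG inter_subset_left inter_subset_right
      (ne_of_inter_mem_edges hF hFG)
  have hmem : H.image π ∈ ({F, G} : Finset (Finset α)) :=
    hpair ▸ mem_filter.mpr ⟨(image_mem_faces_iff hπ).mpr hH, hsub⟩
  rw [← orbit_image hπ H]
  rcases mem_insert.mp hmem with hHF | hHG
  · exact .inl (congrArg X.orbit hHF)
  · exact .inr (congrArg X.orbit (mem_singleton.mp hHG))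

lemma faceOrbits_eq_pair (hX : X.EdgeTransitive) (hF : F ∈ X.faces) (hG : G ∈ X.faces)
    (hFG : F ∩ G ∈ X.edges) : X.faceOrbits = {X.orbit F, X.orbit G} := by
  ext O
  constructor
  · rintro ⟨H, hH, rfl⟩
    exact hX.orbit_eq_or_eq hF hG hFG hH
  · rintro (rfl | rfl)
    exacts [⟨F, hF, rfl⟩, ⟨G, hG, rfl⟩]

end EdgeTransitive

end SimplicialSurface

/-- Let `X` be an edge-transitive simplicial surface such that `Aut(X)` has exactly two
orbits on the faces. Then any two faces of `X` sharing an edge lie in different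
`Aut(X)`-orbits. -/
theorem orbit_ne_of_share_edge
    {α : Type*} [Fintype α] [DecidableEq α] (X : SimplicialSurface α)
    (hX : X.EdgeTransitive) (h2 : X.faceOrbits.ncard = 2)
    (F G : Finset α) (hF : F ∈ X.faces) (hG : G ∈ X.faces)
    (hshare : F ∩ G ∈ X.edges) :
    X.orbit F ≠ X.orbit G := by
  intro heq
  have hone : X.faceOrbits = {X.orbit G} := by
    rw [hX.faceOrbits_eq_pair hF hG hshare, heq, Set.pair_eq_singleton]
  rw [hone, Set.ncard_singleton] at h2
  omega
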